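/- arXiv:math-ph/0110023 — 7 statements merged into one kernel-verified Lean document; each statement's English description precedes it below -/
import Mathlib

section
/- Let n ≥ 1, let A : ℝ → Matrix (Fin n) (Fin n) ℝ and B : ℝ → (Fin n → ℝ) be continuous. Suppose x₁, …, x_{n+1} : ℝ → (Fin n → ℝ) are differentiable solutions of the inhomogeneous linear system x'(t) = A(t) · x(t) + B(t) such that the vectors x₂(0) − x₁(0), …, x_{n+1}(0) − x₁(0) form a basis of ℝⁿ. Then for every differentiable solution x of the same system there exist unique constants k₁, …, kₙ ∈ ℝ such that x(t) = x₁(t) + k₁·(x₂(t) − x₁(t)) + ⋯ + kₙ·(x_{n+1}(t) − x₁(t)) for all t ∈ ℝ. -/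
/-!
The difference of two solutions of `x' = A x + b` solves the homogeneous system, so every affine
combination `x₁ + ∑ kᵢ (xᵢ₊₁ - x₁)` of solutions is again a solution. Being determined by its
value at one time, a solution `x` is therefore such a combination for all times as soon as it is
one at a single time, where the coefficients are its coordinates in a linearly independent family.
-/

open Set

section LinearODE

variable {E : Type*} [NormedAddCommGroup E] [NormedSpace ℝ E]
  {A : ℝ → E →L[ℝ] E} {b c : ℝ → E} {x y p : ℝ → E} {t₀ : ℝ}

/-- The time-dependent vector field `x ↦ A t x + b t`. Its integral curves are the solutions of the
linear system `x' = A x + b`; the homogeneous system is the case `b = 0`. -/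
def affineField (A : ℝ → E →L[ℝ] E) (b : ℝ → E) (t : ℝ) (v : E) : E :=
  A t v + b t

theorem lipschitzWith_affineField (A : ℝ → E →L[ℝ] E) (b : ℝ → E) (t : ℝ) :
    LipschitzWith ‖A t‖₊ (affineField A b t) := by
  simpa only [add_zero] using! (A t).lipschitz.add (LipschitzWith.const (b t))

theorem eq_of_isIntegralCurve_affineField (hA : Continuous A)
    (hx : IsIntegralCurve x (affineField A b)) (hy : IsIntegralCurve y (affineField A b))
    (h : x t₀ = y t₀) : x = y := by
  ext t
  obtain ⟨l, hl⟩ := exists_lt (min t₀ t)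
  obtain ⟨r, hr⟩ := exists_gt (max t₀ t)
  obtain ⟨ht₀, ht⟩ : t₀ ∈ Ioo l r ∧ t ∈ Ioo l r := by grind
  obtain ⟨K, hK⟩ := (isCompact_Icc (a := l) (b := r)).bddAbove_image hA.nnnorm.continuousOn
  have lipschitz : ∀ s ∈ Ioo l r, LipschitzOnWith K (affineField A b s) univ := fun s hs ↦
    ((lipschitzWith_affineField A b s).weaken
      (hK (mem_image_of_mem _ (Ioo_subset_Icc_self hs)))).lipschitzOnWith
  exact ODE_solution_unique_of_mem_Ioo lipschitz ht₀ (fun s _ ↦ ⟨hx s, mem_univ _⟩)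
    (fun s _ ↦ ⟨hy s, mem_univ _⟩) h ht

theorem isIntegralCurve_affineField_add (hx : IsIntegralCurve x (affineField A b))
    (hy : IsIntegralCurve y (affineField A c)) :
    IsIntegralCurve (x + y) (affineField A (b + c)) := fun t ↦ by
  convert (hx t).add (hy t) using 1
  simp only [affineField, Pi.add_apply, map_add]
  abel

theorem isIntegralCurve_affineField_const_smul (k : ℝ)
    (hx : IsIntegralCurve x (affineField A b)) :
    IsIntegralCurve (k • x) (affineField A (k • b)) := fun t ↦ by
  convert (hx t).const_smul k using 1
  simp only [affineField, Pi.smul_apply, map_smul, smul_add]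

theorem isIntegralCurve_affineField_sub (hx : IsIntegralCurve x (affineField A b))
    (hy : IsIntegralCurve y (affineField A c)) :
    IsIntegralCurve (x - y) (affineField A (b - c)) := by
  simpa only [neg_one_smul, ← sub_eq_add_neg] using
    isIntegralCurve_affineField_add hx (isIntegralCurve_affineField_const_smul (-1) hy)

variable {ι : Type*}

theorem isIntegralCurve_affineField_sum (s : Finset ι) {z f : ι → ℝ → E}
    (hz : ∀ i ∈ s, IsIntegralCurve (z i) (affineField A (f i))) :
    IsIntegralCurve (∑ i ∈ s, z i) (affineField A (∑ i ∈ s, f i)) := fun t ↦ by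
  convert HasDerivAt.sum fun i hi ↦ hz i hi t using 1
  simp only [affineField, Finset.sum_apply, map_sum, Finset.sum_add_distrib]

variable [Fintype ι] {z : ι → ℝ → E}

theorem isIntegralCurve_affineField_add_sum_smul_sub (k : ι → ℝ)
    (hp : IsIntegralCurve p (affineField A b)) (hz : ∀ i, IsIntegralCurve (z i) (affineField A b)) :
    IsIntegralCurve (p + ∑ i, k i • (z i - p)) (affineField A b) := by
  simpa only [sub_self, smul_zero, Finset.sum_const_zero, add_zero] using
    isIntegralCurve_affineField_add hp <| isIntegralCurve_affineField_sum Finset.univ fun i _ ↦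
      isIntegralCurve_affineField_const_smul (k i) (isIntegralCurve_affineField_sub (hz i) hp)

theorem forall_eq_add_sum_smul_sub_iff (hA : Continuous A) (t₀ : ℝ)
    (hp : IsIntegralCurve p (affineField A b)) (hz : ∀ i, IsIntegralCurve (z i) (affineField A b))
    (hx : IsIntegralCurve x (affineField A b)) (k : ι → ℝ) :
    (∀ t, x t = p t + ∑ i, k i • (z i t - p t)) ↔
      x t₀ = p t₀ + ∑ i, k i • (z i t₀ - p t₀) := by
  refine ⟨fun h ↦ h t₀, fun h t ↦ ?_⟩
  have hcomb := isIntegralCurve_affineField_add_sum_smul_sub k hp hz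
  have heq : x = p + ∑ i, k i • (z i - p) :=
    eq_of_isIntegralCurve_affineField (t₀ := t₀) hA hx hcomb (by simpa using h)
  simpa using congrFun heq t

end LinearODE

theorem existsUnique_sum_smul_eq {R M ι : Type*} [Semiring R] [AddCommMonoid M]
    [Module R M] [Fintype ι] {v : ι → M} (hv : LinearIndependent R v) {w : M}
    (hw : w ∈ Submodule.span R (range v)) : ∃! k : ι → R, ∑ i, k i • v i = w := by
  have hinj : Function.Injective (Fintype.linearCombination R v) :=
    hv.fintypeLinearCombination_injective
  refine hinj.existsUnique_of_mem_range ?_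
  rwa [← Fintype.range_linearCombination] at hw

section Matrix

variable {m n : Type*} [Fintype n]

theorem continuous_toContinuousLinearMap_mulVecLin {𝕜 : Type*} [NontriviallyNormedField 𝕜]
    [CompleteSpace 𝕜] [Finite m] :
    Continuous fun M : Matrix m n 𝕜 ↦ M.mulVecLin.toContinuousLinearMap := by
  have := Fintype.ofFinite m
  exact continuous_clm_apply.2 fun _ ↦ continuous_id.matrix_mulVec continuous_const

theorem isIntegralCurve_affineField_of_deriv_eq_mulVec {A : ℝ → Matrix n n ℝ} {b x : ℝ → n → ℝ}
    (hx : Differentiable ℝ x) (hderiv : ∀ t, deriv x t = (A t).mulVec (x t) + b t) :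
    IsIntegralCurve x (affineField (fun t ↦ (A t).mulVecLin.toContinuousLinearMap) b) := fun t ↦
  (hx t).hasDerivAt.congr_deriv (hderiv t)

end Matrix

theorem inhomogeneous_linear_superposition_general {E ι : Type*} [NormedAddCommGroup E]
    [NormedSpace ℝ E] [Fintype ι] {A : ℝ → E →L[ℝ] E} (hA : Continuous A) {b : ℝ → E}
    {p x : ℝ → E} {z : ι → ℝ → E} {t₀ : ℝ} (hp : IsIntegralCurve p (affineField A b))
    (hz : ∀ i, IsIntegralCurve (z i) (affineField A b))
    (hindep : LinearIndependent ℝ fun i ↦ z i t₀ - p t₀)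
    (hx : IsIntegralCurve x (affineField A b))
    (hspan : x t₀ - p t₀ ∈ Submodule.span ℝ (range fun i ↦ z i t₀ - p t₀)) :
    ∃! k : ι → ℝ, ∀ t, x t = p t + ∑ i, k i • (z i t - p t) := by
  refine (existsUnique_congr fun k ↦ ?_).2 (existsUnique_sum_smul_eq hindep hspan)
  rw [forall_eq_add_sum_smul_sub_iff hA t₀ hp hz hx, ← sub_eq_iff_eq_add', eq_comm]

/-- Lie superposition for inhomogeneous linear systems: the general solution is an
affine combination, with unique constants, of `n+1` particular solutions whose
initial differences form a basis of `ℝⁿ`. -/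
theorem inhomogeneous_linear_superposition
    (n : ℕ) (hn : 1 ≤ n)
    (A : ℝ → Matrix (Fin n) (Fin n) ℝ) (hA : Continuous A)
    (B : ℝ → (Fin n → ℝ)) (hB : Continuous B)
    (xs : Fin (n + 1) → ℝ → (Fin n → ℝ))
    (hxs_diff : ∀ a, Differentiable ℝ (xs a))
    (hxs_sol : ∀ a t, deriv (xs a) t = (A t).mulVec (xs a t) + B t)
    (hindep : LinearIndependent ℝ (fun a : Fin n => xs a.succ 0 - xs 0 0))
    (hspan : Submodule.span ℝ (Set.range fun a : Fin n => xs a.succ 0 - xs 0 0) = ⊤)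
    (x : ℝ → (Fin n → ℝ))
    (hx_diff : Differentiable ℝ x)
    (hx_sol : ∀ t, deriv x t = (A t).mulVec (x t) + B t) :
    ∃! k : Fin n → ℝ, ∀ t, x t = xs 0 t + ∑ a : Fin n, k a • (xs a.succ t - xs 0 t) := by
  have hxs (a) := isIntegralCurve_affineField_of_deriv_eq_mulVec (hxs_diff a) (hxs_sol a)
  have hx := isIntegralCurve_affineField_of_deriv_eq_mulVec hx_diff hx_sol
  exact inhomogeneous_linear_superposition_general
    (continuous_toContinuousLinearMap_mulVecLin.comp hA) (hxs 0) (fun a ↦ hxs a.succ) hindep hx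
    (hspan ▸ Submodule.mem_top)
end

section
/- Let c₀, c₁, c₂ : ℝ → ℝ and let x, x₁, x₂, x₃ : ℝ → ℝ be differentiable solutions of the Riccati equation y'(t) = c₀(t) + c₁(t)·y(t) + c₂(t)·y(t)². Assume that for all t ∈ ℝ one has x(t) ≠ x₂(t) and x₃(t) ≠ x₁(t). Then the function t ↦ ((x(t) − x₁(t))/(x(t) − x₂(t))) · ((x₃(t) − x₂(t))/(x₃(t) − x₁(t))) is constant on ℝ. -/
/-!
The difference of two solutions `y`, `z` satisfies a homogeneous linear equation: its logarithmic
derivative is `c₁ + c₂ (y + z)`. Hence `(y - z) / (y - w)` has logarithmic derivative `c₂ (z - w)`,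
which does not involve `y`. The second factor of the cross ratio has the same form with `z` and `w`
exchanged, so the logarithmic derivatives of the two factors cancel.
-/

theorem eq_of_hasDerivWithinAt_zero_of_convex {𝕜 E : Type*} [RCLike 𝕜] [NormedAddCommGroup E]
    [NormedSpace 𝕜 E] {f : 𝕜 → E} {s : Set 𝕜} (hs : Convex ℝ s)
    (hf : ∀ t ∈ s, HasDerivWithinAt f 0 s t) {a b : 𝕜} (ha : a ∈ s) (hb : b ∈ s) :
    f a = f b := by
  have hle : ‖f a - f b‖ ≤ 0 * ‖a - b‖ :=
    hs.norm_image_sub_le_of_norm_hasDerivWithin_le hf (fun _ _ ↦ norm_zero.le) hb ha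
  rwa [zero_mul, norm_le_zero_iff, sub_eq_zero] at hle

section LinearEquation

variable {𝕜 𝕜' : Type*} [NontriviallyNormedField 𝕜] [NontriviallyNormedField 𝕜']
  [NormedAlgebra 𝕜 𝕜'] {s : Set 𝕜} {t : 𝕜}

theorem hasDerivWithinAt_div_of_linear {u v : 𝕜 → 𝕜'} {a b : 𝕜'}
    (hu : HasDerivWithinAt u (a * u t) s t) (hv : HasDerivWithinAt v (b * v t) s t)
    (hvt : v t ≠ 0) :
    HasDerivWithinAt (fun τ ↦ u τ / v τ) ((a - b) * (u t / v t)) s t := by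
  refine (hu.fun_div hv hvt).congr_deriv ?_
  field_simp

end LinearEquation

/-- `y` solves the Riccati equation `y' = c₀ + c₁ y + c₂ y²` on `s`. Derivatives are taken within
`s`, so that `s` may be an interval containing its endpoints. -/
def IsRiccatiSolutionOn {𝕜 𝔸 : Type*} [NontriviallyNormedField 𝕜] [NormedCommRing 𝔸]
    [NormedAlgebra 𝕜 𝔸] (c₀ c₁ c₂ y : 𝕜 → 𝔸) (s : Set 𝕜) : Prop :=
  ∀ t ∈ s, HasDerivWithinAt y (c₀ t + c₁ t * y t + c₂ t * y t ^ 2) s t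

/-- The cross ratio of four scalars, with the arguments in the order `x, x₁, x₂, x₃`. It takes the
junk value `0` when `x = x₂` or `x₃ = x₁`. -/
def crossRatio {K : Type*} [Field K] (x x₁ x₂ x₃ : K) : K :=
  (x - x₁) / (x - x₂) * ((x₃ - x₂) / (x₃ - x₁))

namespace IsRiccatiSolutionOn

section Ring

variable {𝕜 𝔸 : Type*} [NontriviallyNormedField 𝕜] [NormedCommRing 𝔸] [NormedAlgebra 𝕜 𝔸]
  {c₀ c₁ c₂ y z : 𝕜 → 𝔸} {s : Set 𝕜} {t : 𝕜}

theorem hasDerivWithinAt_sub (hy : IsRiccatiSolutionOn c₀ c₁ c₂ y s)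
    (hz : IsRiccatiSolutionOn c₀ c₁ c₂ z s) (ht : t ∈ s) :
    HasDerivWithinAt (fun τ ↦ y τ - z τ) ((c₁ t + c₂ t * (y t + z t)) * (y t - z t)) s t :=
  ((hy t ht).fun_sub (hz t ht)).congr_deriv (by ring)

end Ring

section Field

variable {𝕜 𝕜' : Type*} [NontriviallyNormedField 𝕜] [NontriviallyNormedField 𝕜']
  [NormedAlgebra 𝕜 𝕜'] {c₀ c₁ c₂ x x₁ x₂ x₃ y z w : 𝕜 → 𝕜'} {s : Set 𝕜} {t : 𝕜}

theorem hasDerivWithinAt_sub_div_sub (hy : IsRiccatiSolutionOn c₀ c₁ c₂ y s)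
    (hz : IsRiccatiSolutionOn c₀ c₁ c₂ z s) (hw : IsRiccatiSolutionOn c₀ c₁ c₂ w s)
    (ht : t ∈ s) (hyw : y t ≠ w t) :
    HasDerivWithinAt (fun τ ↦ (y τ - z τ) / (y τ - w τ))
      (c₂ t * (z t - w t) * ((y t - z t) / (y t - w t))) s t :=
  (hasDerivWithinAt_div_of_linear (hy.hasDerivWithinAt_sub hz ht) (hy.hasDerivWithinAt_sub hw ht)
    (sub_ne_zero.mpr hyw)).congr_deriv (by ring)

theorem hasDerivWithinAt_crossRatio (hx : IsRiccatiSolutionOn c₀ c₁ c₂ x s)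
    (hx₁ : IsRiccatiSolutionOn c₀ c₁ c₂ x₁ s) (hx₂ : IsRiccatiSolutionOn c₀ c₁ c₂ x₂ s)
    (hx₃ : IsRiccatiSolutionOn c₀ c₁ c₂ x₃ s) (ht : t ∈ s)
    (hne₁ : x t ≠ x₂ t) (hne₂ : x₃ t ≠ x₁ t) :
    HasDerivWithinAt (fun τ ↦ crossRatio (x τ) (x₁ τ) (x₂ τ) (x₃ τ)) 0 s t :=
  ((hx.hasDerivWithinAt_sub_div_sub hx₁ hx₂ ht hne₁).fun_mul
    (hx₃.hasDerivWithinAt_sub_div_sub hx₂ hx₁ ht hne₂)).congr_deriv (by ring)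

end Field

end IsRiccatiSolutionOn

theorem riccati_cross_ratio_constant_general {𝕜 𝕜' : Type*} [RCLike 𝕜]
    [NontriviallyNormedField 𝕜'] [NormedAlgebra 𝕜 𝕜'] {c₀ c₁ c₂ x x₁ x₂ x₃ : 𝕜 → 𝕜'}
    {I : Set 𝕜} (hI : Convex ℝ I)
    (hx : IsRiccatiSolutionOn c₀ c₁ c₂ x I) (hx₁ : IsRiccatiSolutionOn c₀ c₁ c₂ x₁ I)
    (hx₂ : IsRiccatiSolutionOn c₀ c₁ c₂ x₂ I) (hx₃ : IsRiccatiSolutionOn c₀ c₁ c₂ x₃ I)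
    (hne₁ : ∀ t ∈ I, x t ≠ x₂ t) (hne₂ : ∀ t ∈ I, x₃ t ≠ x₁ t) {a b : 𝕜} (ha : a ∈ I)
    (hb : b ∈ I) :
    crossRatio (x a) (x₁ a) (x₂ a) (x₃ a) = crossRatio (x b) (x₁ b) (x₂ b) (x₃ b) :=
  eq_of_hasDerivWithinAt_zero_of_convex (f := fun τ ↦ crossRatio (x τ) (x₁ τ) (x₂ τ) (x₃ τ)) hI
    (fun τ hτ ↦ hx.hasDerivWithinAt_crossRatio hx₁ hx₂ hx₃ hτ (hne₁ τ hτ) (hne₂ τ hτ)) ha hb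

/-- The cross ratio of four solutions of a Riccati equation is constant. -/
theorem riccati_cross_ratio_constant
    (c₀ c₁ c₂ : ℝ → ℝ) (x x₁ x₂ x₃ : ℝ → ℝ)
    (hx : ∀ t, HasDerivAt x (c₀ t + c₁ t * x t + c₂ t * (x t) ^ 2) t)
    (hx₁ : ∀ t, HasDerivAt x₁ (c₀ t + c₁ t * x₁ t + c₂ t * (x₁ t) ^ 2) t)
    (hx₂ : ∀ t, HasDerivAt x₂ (c₀ t + c₁ t * x₂ t + c₂ t * (x₂ t) ^ 2) t)
    (hx₃ : ∀ t, HasDerivAt x₃ (c₀ t + c₁ t * x₃ t + c₂ t * (x₃ t) ^ 2) t)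
    (hne₁ : ∀ t, x t ≠ x₂ t) (hne₂ : ∀ t, x₃ t ≠ x₁ t) :
    ∀ t s : ℝ,
      ((x t - x₁ t) / (x t - x₂ t)) * ((x₃ t - x₂ t) / (x₃ t - x₁ t)) =
      ((x s - x₁ s) / (x s - x₂ s)) * ((x₃ s - x₂ s) / (x₃ s - x₁ s)) :=
  fun t s ↦ riccati_cross_ratio_constant_general convex_univ
    (fun τ _ ↦ (hx τ).hasDerivWithinAt) (fun τ _ ↦ (hx₁ τ).hasDerivWithinAt)
    (fun τ _ ↦ (hx₂ τ).hasDerivWithinAt) (fun τ _ ↦ (hx₃ τ).hasDerivWithinAt)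
    (fun τ _ ↦ hne₁ τ) (fun τ _ ↦ hne₂ τ) (Set.mem_univ t) (Set.mem_univ s)
end

section
/- Let b₁, b₂, b₃ : ℝ → ℝ and let (x₁,y₁), (x₂,y₂), (x₃,y₃) : ℝ → ℝ × ℝ be three differentiable solutions of the planar system x' = b₁(t) + b₂(t)·x + b₃(t)·(x² − y²), y' = b₂(t)·y + 2·b₃(t)·x·y. Let k₁, k₂ ∈ ℝ and define, pointwise in t, N_x = x₁((x₂−x₃)² + (y₂−y₃)²) + k₁(x₂²x₃ + (x₃−x₂)x₁² + (y₁−y₂)²x₃ − x₂(x₃² + (y₁−y₃)²) − x₁((x₂−x₃)² + (y₂−y₃)²)) + k₂(x₃²(y₂−y₁) + x₂²(y₁−y₃) + (y₃−y₂)(x₁² + (y₁−y₂)(y₁−y₃))) + (k₁²+k₂²)·x₂·((x₁−x₃)² + (y₁−y₃)²); N_y = y₁((x₂−x₃)² + (y₂−y₃)²) + k₁(x₂²(y₃−y₁) − x₃²(y₁+y₂) + 2x₂(x₃y₁ − x₁y₃) + 2x₁x₃y₂ − (x₁² + (y₁+y₂)(y₁−y₃))(y₂−y₃)) + k₂(x₁²(x₂−x₃)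 + x₂²x₃ + x₃(y₂²−y₁²) − x₂(x₃² + y₃² − y₁²) + x₁(x₃² − x₂² + y₃² − y₂²)) + (k₁²+k₂²)·y₂·((x₁−x₃)² + (y₁−y₃)²); D = (x₂−x₃)² + (y₂−y₃)² − 2k₁((x₁−x₃)(x₂−x₃) + (y₁−y₃)(y₂−y₃)) + 2k₂(x₃(y₂−y₁) + x₂(y₁−y₃) + x₁(y₃−y₂)) + (k₁²+k₂²)((x₁−x₃)² + (y₁−y₃)²). If D(t) ≠ 0 for all t ∈ ℝ, then the pair (x, y) = (N_x/D, N_y/D) is differentiable and is also a solution of the same planar system. -/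
/-!
In the variable `z = x + i y` the planar system is the complex Riccati equation
`z' = b₁ + b₂ z + b₃ z²`, whose flow consists of Möbius transformations. Hence the cross ratio
`k = (w - z₁) (z₂ - z₃) / ((w - z₂) (z₁ - z₃))` of four solutions is constant. Solving this relation
for `w` gives `w = N / D` with `N = z₁ (z₂ - z₃) - k z₂ (z₁ - z₃)` and
`D = z₂ - z₃ - k (z₁ - z₃)`, and conversely any such `w` is a solution because `(N, D)` satisfies
the linear system that projects to the Riccati equation. With `k = k₁ + i k₂`, multiplying numerator
and denominator by the conjugate of `D` gives the real formula.
-/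

open scoped Topology ComplexConjugate

section Riccati

/-- The Riccati equation `z' = b₁ + b₂ z + b₃ z²` at the single time `t`; `b₁`, `b₂`, `b₃` are the
values of the coefficients at that time. -/
def HasRiccatiDerivAt {𝕜 A : Type*} [NontriviallyNormedField 𝕜] [NormedCommRing A]
    [NormedAlgebra 𝕜 A] (b₁ b₂ b₃ : A) (z : 𝕜 → A) (t : 𝕜) : Prop :=
  HasDerivAt z (b₁ + b₂ * z t + b₃ * z t ^ 2) t

/-- The numerator of the point `w` whose cross ratio
`(w - z₁) (z₂ - z₃) / ((w - z₂) (z₁ - z₃))` with `z₁`, `z₂`, `z₃` is `k`. -/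
def superpositionNum {A : Type*} [CommRing A] (k z₁ z₂ z₃ : A) : A :=
  z₁ * (z₂ - z₃) - k * (z₂ * (z₁ - z₃))

/-- The denominator of the point `w` whose cross ratio
`(w - z₁) (z₂ - z₃) / ((w - z₂) (z₁ - z₃))` with `z₁`, `z₂`, `z₃` is `k`. -/
def superpositionDen {A : Type*} [CommRing A] (k z₁ z₂ z₃ : A) : A :=
  z₂ - z₃ - k * (z₁ - z₃)

section CommRing

variable {𝕜 A : Type*} [NontriviallyNormedField 𝕜] [NormedCommRing A] [NormedAlgebra 𝕜 A]
  {b₁ b₂ b₃ : A} {z₁ z₂ z₃ : 𝕜 → A} {t : 𝕜}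

theorem HasRiccatiDerivAt.hasDerivAt_superpositionNum (h₁ : HasRiccatiDerivAt b₁ b₂ b₃ z₁ t)
    (h₂ : HasRiccatiDerivAt b₁ b₂ b₃ z₂ t) (h₃ : HasRiccatiDerivAt b₁ b₂ b₃ z₃ t) (k : A) :
    HasDerivAt (fun s ↦ superpositionNum k (z₁ s) (z₂ s) (z₃ s))
      (b₁ * superpositionDen k (z₁ t) (z₂ t) (z₃ t)
        + (2 * b₂ + b₃ * (z₁ t + z₂ t + z₃ t)) * superpositionNum k (z₁ t) (z₂ t) (z₃ t)) t := by
  refine ((HasDerivAt.fun_mul h₁ (HasDerivAt.fun_sub h₂ h₃)).fun_sub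
    ((HasDerivAt.fun_mul h₂ (HasDerivAt.fun_sub h₁ h₃)).const_mul k)).congr_deriv ?_
  simp only [superpositionNum, superpositionDen]
  ring

theorem HasRiccatiDerivAt.hasDerivAt_superpositionDen (h₁ : HasRiccatiDerivAt b₁ b₂ b₃ z₁ t)
    (h₂ : HasRiccatiDerivAt b₁ b₂ b₃ z₂ t) (h₃ : HasRiccatiDerivAt b₁ b₂ b₃ z₃ t) (k : A) :
    HasDerivAt (fun s ↦ superpositionDen k (z₁ s) (z₂ s) (z₃ s))
      ((b₂ + b₃ * (z₁ t + z₂ t + z₃ t)) * superpositionDen k (z₁ t) (z₂ t) (z₃ t)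
        - b₃ * superpositionNum k (z₁ t) (z₂ t) (z₃ t)) t := by
  refine ((HasDerivAt.fun_sub h₂ h₃).fun_sub
    ((HasDerivAt.fun_sub h₁ h₃).const_mul k)).congr_deriv ?_
  simp only [superpositionNum, superpositionDen]
  ring

end CommRing

section Field

variable {𝕜 K : Type*} [NontriviallyNormedField 𝕜] [NontriviallyNormedField K] [NormedAlgebra 𝕜 K]
  {b₁ b₂ b₃ : K} {t : 𝕜}

/- The common multiplier `μ` rescales `(N, D)` without moving the point `N / D` of the projective
line. -/
theorem HasRiccatiDerivAt.div_of_linear {N D : 𝕜 → K} {μ : K}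
    (hN : HasDerivAt N (b₁ * D t + (b₂ + μ) * N t) t)
    (hD : HasDerivAt D (μ * D t - b₃ * N t) t) (hDt : D t ≠ 0) :
    HasRiccatiDerivAt b₁ b₂ b₃ (fun s ↦ N s / D s) t := by
  refine (hN.fun_div hD hDt).congr_deriv ?_
  field_simp
  ring

theorem HasRiccatiDerivAt.superposition {z₁ z₂ z₃ : 𝕜 → K} (h₁ : HasRiccatiDerivAt b₁ b₂ b₃ z₁ t)
    (h₂ : HasRiccatiDerivAt b₁ b₂ b₃ z₂ t) (h₃ : HasRiccatiDerivAt b₁ b₂ b₃ z₃ t) {k : K}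
    (hD : superpositionDen k (z₁ t) (z₂ t) (z₃ t) ≠ 0) :
    HasRiccatiDerivAt b₁ b₂ b₃ (fun s ↦ superpositionNum k (z₁ s) (z₂ s) (z₃ s) /
      superpositionDen k (z₁ s) (z₂ s) (z₃ s)) t := by
  refine .div_of_linear (μ := b₂ + b₃ * (z₁ t + z₂ t + z₃ t)) ?_
    (h₁.hasDerivAt_superpositionDen h₂ h₃ k) hD
  exact (h₁.hasDerivAt_superpositionNum h₂ h₃ k).congr_deriv (by ring)

end Field

end Riccati

section Planar

/-- The planar system `x' = b₁ + b₂ x + b₃ (x² - y²)`, `y' = b₂ y + 2 b₃ x y` at the single time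
`t`; `b₁`, `b₂`, `b₃` are the values of the coefficients at that time. -/
def HasPlanarDerivAt (b₁ b₂ b₃ : ℝ) (x y : ℝ → ℝ) (t : ℝ) : Prop :=
  HasDerivAt x (b₁ + b₂ * x t + b₃ * (x t ^ 2 - y t ^ 2)) t ∧
    HasDerivAt y (b₂ * y t + 2 * b₃ * x t * y t) t

theorem hasDerivAt_complexMk_iff {x y : ℝ → ℝ} {c : ℂ} {t : ℝ} :
    HasDerivAt (fun s ↦ (⟨x s, y s⟩ : ℂ)) c t ↔ HasDerivAt x c.re t ∧ HasDerivAt y c.im t := by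
  refine ⟨fun h ↦ ⟨Complex.reCLM.hasFDerivAt.comp_hasDerivAt t h,
    Complex.imCLM.hasFDerivAt.comp_hasDerivAt t h⟩, fun ⟨hx, hy⟩ ↦ ?_⟩
  exact Complex.equivRealProdCLM.symm.hasFDerivAt.comp_hasDerivAt t (hx.prodMk hy)

theorem hasRiccatiDerivAt_complexMk_iff {b₁ b₂ b₃ : ℝ} {x y : ℝ → ℝ} {t : ℝ} :
    HasRiccatiDerivAt (b₁ : ℂ) b₂ b₃ (fun s ↦ (⟨x s, y s⟩ : ℂ)) t ↔
      HasPlanarDerivAt b₁ b₂ b₃ x y t := by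
  rw [HasRiccatiDerivAt, hasDerivAt_complexMk_iff, HasPlanarDerivAt]
  refine and_congr ?_ ?_ <;> refine iff_of_eq (congrArg (HasDerivAt _ · t) ?_)
  · simp [sq]
  · simp only [sq, Complex.add_im, Complex.mul_im, Complex.ofReal_re, Complex.ofReal_im]
    ring

section Coordinates

variable (k₁ k₂ x₁ y₁ x₂ y₂ x₃ y₃ : ℝ)

theorem normSq_superpositionDen :
    Complex.normSq (superpositionDen ⟨k₁, k₂⟩ ⟨x₁, y₁⟩ ⟨x₂, y₂⟩ ⟨x₃, y₃⟩) =
      (x₂ - x₃) ^ 2 + (y₂ - y₃) ^ 2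
      - 2 * k₁ * ((x₁ - x₃) * (x₂ - x₃) + (y₁ - y₃) * (y₂ - y₃))
      + 2 * k₂ * (x₃ * (y₂ - y₁) + x₂ * (y₁ - y₃) + x₁ * (y₃ - y₂))
      + (k₁ ^ 2 + k₂ ^ 2) * ((x₁ - x₃) ^ 2 + (y₁ - y₃) ^ 2) := by
  simp only [superpositionDen, Complex.normSq_apply, Complex.sub_re, Complex.sub_im,
    Complex.mul_re, Complex.mul_im]
  ring

theorem superpositionNum_mul_conj_superpositionDen :
    (superpositionNum ⟨k₁, k₂⟩ ⟨x₁, y₁⟩ ⟨x₂, y₂⟩ ⟨x₃, y₃⟩ : ℂ) *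
        conj (superpositionDen ⟨k₁, k₂⟩ ⟨x₁, y₁⟩ ⟨x₂, y₂⟩ ⟨x₃, y₃⟩) =
      ⟨x₁ * ((x₂ - x₃) ^ 2 + (y₂ - y₃) ^ 2)
        + k₁ * (x₂ ^ 2 * x₃ + (x₃ - x₂) * x₁ ^ 2 + (y₁ - y₂) ^ 2 * x₃
          - x₂ * (x₃ ^ 2 + (y₁ - y₃) ^ 2) - x₁ * ((x₂ - x₃) ^ 2 + (y₂ - y₃) ^ 2))
        + k₂ * (x₃ ^ 2 * (y₂ - y₁) + x₂ ^ 2 * (y₁ - y₃)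
          + (y₃ - y₂) * (x₁ ^ 2 + (y₁ - y₂) * (y₁ - y₃)))
        + (k₁ ^ 2 + k₂ ^ 2) * x₂ * ((x₁ - x₃) ^ 2 + (y₁ - y₃) ^ 2),
      y₁ * ((x₂ - x₃) ^ 2 + (y₂ - y₃) ^ 2)
        + k₁ * (x₂ ^ 2 * (y₃ - y₁) - x₃ ^ 2 * (y₁ + y₂) + 2 * x₂ * (x₃ * y₁ - x₁ * y₃)
          + 2 * x₁ * x₃ * y₂ - (x₁ ^ 2 + (y₁ + y₂) * (y₁ - y₃)) * (y₂ - y₃))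
        + k₂ * (x₁ ^ 2 * (x₂ - x₃) + x₂ ^ 2 * x₃ + x₃ * (y₂ ^ 2 - y₁ ^ 2)
          - x₂ * (x₃ ^ 2 + y₃ ^ 2 - y₁ ^ 2) + x₁ * (x₃ ^ 2 - x₂ ^ 2 + y₃ ^ 2 - y₂ ^ 2))
        + (k₁ ^ 2 + k₂ ^ 2) * y₂ * ((x₁ - x₃) ^ 2 + (y₁ - y₃) ^ 2)⟩ := by
  apply Complex.ext <;>
    simp only [superpositionNum, superpositionDen, Complex.sub_re, Complex.sub_im,
      Complex.mul_re, Complex.mul_im, Complex.conj_re, Complex.conj_im] <;>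
    ring

end Coordinates

theorem complex_div_eq_mul_conj_div_normSq (z w : ℂ) :
    z / w = ⟨(z * conj w).re / Complex.normSq w, (z * conj w).im / Complex.normSq w⟩ := by
  apply Complex.ext <;>
    simp only [Complex.div_re, Complex.div_im, Complex.mul_re, Complex.mul_im, Complex.conj_re,
      Complex.conj_im] <;>
    ring

theorem planar_sl2_superposition_formula_general {b₁ b₂ b₃ t : ℝ} {x₁ y₁ x₂ y₂ x₃ y₃ : ℝ → ℝ}
    (h₁ : HasPlanarDerivAt b₁ b₂ b₃ x₁ y₁ t) (h₂ : HasPlanarDerivAt b₁ b₂ b₃ x₂ y₂ t)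
    (h₃ : HasPlanarDerivAt b₁ b₂ b₃ x₃ y₃ t) {k : ℂ} {x y : ℝ → ℝ}
    (hD : superpositionDen k ⟨x₁ t, y₁ t⟩ ⟨x₂ t, y₂ t⟩ ⟨x₃ t, y₃ t⟩ ≠ 0)
    (hxy : ∀ᶠ s in 𝓝 t, (⟨x s, y s⟩ : ℂ) =
      superpositionNum k ⟨x₁ s, y₁ s⟩ ⟨x₂ s, y₂ s⟩ ⟨x₃ s, y₃ s⟩ /
        superpositionDen k ⟨x₁ s, y₁ s⟩ ⟨x₂ s, y₂ s⟩ ⟨x₃ s, y₃ s⟩) :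
    HasPlanarDerivAt b₁ b₂ b₃ x y t := by
  rw [← hasRiccatiDerivAt_complexMk_iff] at h₁ h₂ h₃ ⊢
  have hsup := h₁.superposition h₂ h₃ hD
  rw [HasRiccatiDerivAt, ← hxy.self_of_nhds] at hsup
  exact hsup.congr_of_eventuallyEq hxy

end Planar

/-- The nonlinear superposition formula for the planar `sl(2,ℝ)` Lie system
`x' = b₁ + b₂ x + b₃ (x² − y²)`, `y' = b₂ y + 2 b₃ x y`: the combination
`(N_x/D, N_y/D)` of three solutions with constants `k₁, k₂` is again a solution. -/
theorem planar_sl2_superposition_formula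
    (b₁ b₂ b₃ : ℝ → ℝ) (x₁ y₁ x₂ y₂ x₃ y₃ : ℝ → ℝ)
    (hx₁ : ∀ t, HasDerivAt x₁ (b₁ t + b₂ t * x₁ t + b₃ t * ((x₁ t) ^ 2 - (y₁ t) ^ 2)) t)
    (hy₁ : ∀ t, HasDerivAt y₁ (b₂ t * y₁ t + 2 * b₃ t * x₁ t * y₁ t) t)
    (hx₂ : ∀ t, HasDerivAt x₂ (b₁ t + b₂ t * x₂ t + b₃ t * ((x₂ t) ^ 2 - (y₂ t) ^ 2)) t)
    (hy₂ : ∀ t, HasDerivAt y₂ (b₂ t * y₂ t + 2 * b₃ t * x₂ t * y₂ t) t)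
    (hx₃ : ∀ t, HasDerivAt x₃ (b₁ t + b₂ t * x₃ t + b₃ t * ((x₃ t) ^ 2 - (y₃ t) ^ 2)) t)
    (hy₃ : ∀ t, HasDerivAt y₃ (b₂ t * y₃ t + 2 * b₃ t * x₃ t * y₃ t) t)
    (k₁ k₂ : ℝ)
    (Nx Ny D : ℝ → ℝ)
    (hNx : ∀ t, Nx t =
      x₁ t * ((x₂ t - x₃ t) ^ 2 + (y₂ t - y₃ t) ^ 2)
      + k₁ * ((x₂ t) ^ 2 * x₃ t + (x₃ t - x₂ t) * (x₁ t) ^ 2 + (y₁ t - y₂ t) ^ 2 * x₃ t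
          - x₂ t * ((x₃ t) ^ 2 + (y₁ t - y₃ t) ^ 2)
          - x₁ t * ((x₂ t - x₃ t) ^ 2 + (y₂ t - y₃ t) ^ 2))
      + k₂ * ((x₃ t) ^ 2 * (y₂ t - y₁ t) + (x₂ t) ^ 2 * (y₁ t - y₃ t)
          + (y₃ t - y₂ t) * ((x₁ t) ^ 2 + (y₁ t - y₂ t) * (y₁ t - y₃ t)))
      + (k₁ ^ 2 + k₂ ^ 2) * x₂ t * ((x₁ t - x₃ t) ^ 2 + (y₁ t - y₃ t) ^ 2))
    (hNy : ∀ t, Ny t =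
      y₁ t * ((x₂ t - x₃ t) ^ 2 + (y₂ t - y₃ t) ^ 2)
      + k₁ * ((x₂ t) ^ 2 * (y₃ t - y₁ t) - (x₃ t) ^ 2 * (y₁ t + y₂ t)
          + 2 * x₂ t * (x₃ t * y₁ t - x₁ t * y₃ t) + 2 * x₁ t * x₃ t * y₂ t
          - ((x₁ t) ^ 2 + (y₁ t + y₂ t) * (y₁ t - y₃ t)) * (y₂ t - y₃ t))
      + k₂ * ((x₁ t) ^ 2 * (x₂ t - x₃ t) + (x₂ t) ^ 2 * x₃ t
          + x₃ t * ((y₂ t) ^ 2 - (y₁ t) ^ 2)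
          - x₂ t * ((x₃ t) ^ 2 + (y₃ t) ^ 2 - (y₁ t) ^ 2)
          + x₁ t * ((x₃ t) ^ 2 - (x₂ t) ^ 2 + (y₃ t) ^ 2 - (y₂ t) ^ 2))
      + (k₁ ^ 2 + k₂ ^ 2) * y₂ t * ((x₁ t - x₃ t) ^ 2 + (y₁ t - y₃ t) ^ 2))
    (hD : ∀ t, D t =
      (x₂ t - x₃ t) ^ 2 + (y₂ t - y₃ t) ^ 2
      - 2 * k₁ * ((x₁ t - x₃ t) * (x₂ t - x₃ t) + (y₁ t - y₃ t) * (y₂ t - y₃ t))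
      + 2 * k₂ * (x₃ t * (y₂ t - y₁ t) + x₂ t * (y₁ t - y₃ t) + x₁ t * (y₃ t - y₂ t))
      + (k₁ ^ 2 + k₂ ^ 2) * ((x₁ t - x₃ t) ^ 2 + (y₁ t - y₃ t) ^ 2))
    (hD_ne : ∀ t, D t ≠ 0) :
    ∀ t,
      HasDerivAt (fun s => Nx s / D s)
        (b₁ t + b₂ t * (Nx t / D t) + b₃ t * ((Nx t / D t) ^ 2 - (Ny t / D t) ^ 2)) t ∧
      HasDerivAt (fun s => Ny s / D s)
        (b₂ t * (Ny t / D t) + 2 * b₃ t * (Nx t / D t) * (Ny t / D t)) t :=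
  fun t ↦ planar_sl2_superposition_formula_general
    (x := fun s ↦ Nx s / D s) (y := fun s ↦ Ny s / D s) (k := ⟨k₁, k₂⟩)
    ⟨hx₁ t, hy₁ t⟩ ⟨hx₂ t, hy₂ t⟩ ⟨hx₃ t, hy₃ t⟩
    (fun h ↦ hD_ne t <| by rw [hD, ← normSq_superpositionDen, h, map_zero])
    (.of_forall fun s ↦ by
      rw [complex_div_eq_mul_conj_div_normSq, superpositionNum_mul_conj_superpositionDen,
        normSq_superpositionDen, hNx, hNy, hD])
end

section
/- Let c₀, c₁, c₂ : ℝ → ℝ and let x, x₁ : ℝ → ℝ be differentiable solutions of the Riccati equation y'(t) = c₀(t) + c₁(t)·y(t) + c₂(t)·y(t)². Assume x₁(t) ≠ 0 and x(t) ≠ x₁(t) for all t ∈ ℝ. Then the function x̃(t) = x(t)·x₁(t)/(x₁(t) − x(t)) is differentiable and satisfies x̃'(t) = (2·c₀(t)/x₁(t) + c₁(t))·x̃(t) + c₀(t) for all t ∈ ℝ. -/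
/-!
Formally `1/x̃ = 1/x - 1/x₁`, and `1/x` and `1/x₁` solve the Riccati equation with coefficients
`-c₂, -c₁, -c₀`, so the constant term `-c₂` cancels in the difference. Clearing denominators gives
an argument that also covers the zeros of `x`: the numerator `x' x₁² - x² x₁'` of `x̃'` does not
involve `c₂` and is divisible by `x₁ - x`.
-/

theorem riccati_mul_sq_sub_sq_mul {R : Type*} [CommRing R] (c₀ c₁ c₂ u v : R) :
    (c₀ + c₁ * u + c₂ * u ^ 2) * v ^ 2 - u ^ 2 * (c₀ + c₁ * v + c₂ * v ^ 2) =
      (v - u) * (c₀ * (v + u) + c₁ * (u * v)) := by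
  ring

theorem add_div_sub_eq {K : Type*} [Field K] {u v : K} (hv : v ≠ 0) (huv : u ≠ v) :
    (v + u) / (v - u) = 2 / v * (u * v / (v - u)) + 1 := by
  have hsub : v - u ≠ 0 := sub_ne_zero.mpr huv.symm
  field_simp
  ring

section NormedField

variable {𝕜 𝕜' : Type*} [NontriviallyNormedField 𝕜] [NontriviallyNormedField 𝕜']
  [NormedAlgebra 𝕜 𝕜'] {x x₁ : 𝕜 → 𝕜'} {s : Set 𝕜} {t : 𝕜}

theorem hasDerivWithinAt_mul_div_sub {x' x₁' : 𝕜'} (hx : HasDerivWithinAt x x' s t)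
    (hx₁ : HasDerivWithinAt x₁ x₁' s t) (hne : x t ≠ x₁ t) :
    HasDerivWithinAt (fun r => x r * x₁ r / (x₁ r - x r))
      ((x' * x₁ t ^ 2 - x t ^ 2 * x₁') / (x₁ t - x t) ^ 2) s t := by
  refine ((hx.fun_mul hx₁).fun_div (hx₁.fun_sub hx) (sub_ne_zero.mpr hne.symm)).congr_deriv ?_
  ring

theorem riccati_reduction_stabilizer_of_zero_general {c₀ c₁ c₂ : 𝕜'}
    (hx : HasDerivWithinAt x (c₀ + c₁ * x t + c₂ * x t ^ 2) s t)
    (hx₁ : HasDerivWithinAt x₁ (c₀ + c₁ * x₁ t + c₂ * x₁ t ^ 2) s t)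
    (hx₁_ne : x₁ t ≠ 0) (hne : x t ≠ x₁ t) :
    HasDerivWithinAt (fun r => x r * x₁ r / (x₁ r - x r))
      ((2 * c₀ / x₁ t + c₁) * (x t * x₁ t / (x₁ t - x t)) + c₀) s t := by
  have hsub : x₁ t - x t ≠ 0 := sub_ne_zero.mpr hne.symm
  refine (hasDerivWithinAt_mul_div_sub hx hx₁ hne).congr_deriv ?_
  calc
    _ = (x₁ t - x t) * (c₀ * (x₁ t + x t) + c₁ * (x t * x₁ t)) / (x₁ t - x t) ^ 2 := by
      rw [riccati_mul_sq_sub_sq_mul]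
    _ = (c₀ * (x₁ t + x t) + c₁ * (x t * x₁ t)) / (x₁ t - x t) := by
      rw [sq, mul_div_mul_left _ _ hsub]
    _ = c₀ * ((x₁ t + x t) / (x₁ t - x t)) + c₁ * (x t * x₁ t / (x₁ t - x t)) := by
      ring
    _ = (2 * c₀ / x₁ t + c₁) * (x t * x₁ t / (x₁ t - x t)) + c₀ := by
      rw [add_div_sub_eq hx₁_ne hne]
      ring

end NormedField

/-- Reduction of the Riccati equation using a particular solution `x₁` via the
change of variable `x̃ = x x₁/(x₁ − x)` (stabilizer of the origin): `x̃`
satisfies the inhomogeneous linear equation `x̃' = (2c₀/x₁ + c₁) x̃ + c₀`. -/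
theorem riccati_reduction_stabilizer_of_zero
    (c₀ c₁ c₂ : ℝ → ℝ) (x x₁ : ℝ → ℝ)
    (hx : ∀ t, HasDerivAt x (c₀ t + c₁ t * x t + c₂ t * (x t) ^ 2) t)
    (hx₁ : ∀ t, HasDerivAt x₁ (c₀ t + c₁ t * x₁ t + c₂ t * (x₁ t) ^ 2) t)
    (hx₁_ne : ∀ t, x₁ t ≠ 0)
    (hne : ∀ t, x t ≠ x₁ t) :
    ∀ t, HasDerivAt (fun s => x s * x₁ s / (x₁ s - x s))
      ((2 * c₀ t / x₁ t + c₁ t) * (x t * x₁ t / (x₁ t - x t)) + c₀ t) t := by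
  intro t
  exact (riccati_reduction_stabilizer_of_zero_general (hx t).hasDerivWithinAt
    (hx₁ t).hasDerivWithinAt (hx₁_ne t) (hne t)).hasDerivAt Filter.univ_mem
end

section
/- Let m ∈ ℝ with m ≠ 0, let f : ℝ → ℝ be continuous, and let x, p : ℝ → ℝ be differentiable with x'(t) = p(t)/m and p'(t) = −f(t) for all t ∈ ℝ. Then the functions I₁(t) = p(t) + ∫₀ᵗ f(s) ds and I₂(t) = x(t) − (t/m)·(p(t) + ∫₀ᵗ f(s) ds) + (1/m)·∫₀ᵗ (∫₀^{s} f(u) du) ds are constant on ℝ. -/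
/-!
The two constants of motion are the initial data: integrating `p' = -f` once from `t₀` shows that
`I₁` is the momentum `p t₀`, and integrating it a second time, with `m • x' = p`, shows that `I₂`
is the position `x t₀`.
-/

open MeasureTheory Set

section HamiltonEquations

variable {E : Type*} [NormedAddCommGroup E] [NormedSpace ℝ E] [CompleteSpace E]
  {m : ℝ} {f x p : ℝ → E} {a b : ℝ}

theorem integral_eq_sub_of_hasDerivAt_neg (hp : ∀ t ∈ uIcc a b, HasDerivAt p (-f t) t)
    (hf : IntervalIntegrable f volume a b) : ∫ s in a..b, f s = p a - p b := by
  have h_neg : ∫ s in a..b, -f s = p b - p a :=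
    intervalIntegral.integral_eq_sub_of_hasDerivAt hp hf.neg
  rw [← neg_sub, ← h_neg, intervalIntegral.integral_neg, neg_neg]

theorem integral_eq_smul_sub_of_hasDerivAt_inv_smul (hm : m ≠ 0)
    (hx : ∀ t ∈ uIcc a b, HasDerivAt x (m⁻¹ • p t) t) (hp : IntervalIntegrable p volume a b) :
    ∫ s in a..b, p s = m • (x b - x a) := by
  rw [← intervalIntegral.integral_eq_sub_of_hasDerivAt hx (hp.smul m⁻¹),
    intervalIntegral.integral_smul, smul_inv_smul₀ hm]

theorem integral_integral_eq_smul_sub_smul_sub (hm : m ≠ 0)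
    (hx : ∀ t ∈ uIcc a b, HasDerivAt x (m⁻¹ • p t) t)
    (hp : ∀ t ∈ uIcc a b, HasDerivAt p (-f t) t) (hf : IntervalIntegrable f volume a b) :
    ∫ s in a..b, ∫ u in a..s, f u = (b - a) • p a - m • (x b - x a) := by
  have hp_int : IntervalIntegrable p volume a b :=
    ContinuousOn.intervalIntegrable fun t ht ↦ (hp t ht).continuousAt.continuousWithinAt
  have h_inner : EqOn (fun s ↦ ∫ u in a..s, f u) (fun s ↦ p a - p s) (uIcc a b) := fun s hs ↦
    have h_sub : uIcc a s ⊆ uIcc a b := uIcc_subset_uIcc_left hs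
    integral_eq_sub_of_hasDerivAt_neg (fun t ht ↦ hp t (h_sub ht)) (hf.mono_set h_sub)
  calc ∫ s in a..b, ∫ u in a..s, f u
    _ = ∫ s in a..b, (p a - p s) := intervalIntegral.integral_congr h_inner
    _ = (b - a) • p a - ∫ s in a..b, p s := by
      rw [intervalIntegral.integral_sub intervalIntegrable_const hp_int,
        intervalIntegral.integral_const]
    _ = (b - a) • p a - m • (x b - x a) := by
      rw [integral_eq_smul_sub_of_hasDerivAt_inv_smul hm hx hp_int]

theorem classical_linear_potential_constants_of_motion_general (hm : m ≠ 0)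
    (hf : LocallyIntegrable f) (hx : ∀ t, HasDerivAt x (m⁻¹ • p t) t)
    (hp : ∀ t, HasDerivAt p (-f t) t) (t₀ t : ℝ) :
    p t + ∫ s in t₀..t, f s = p t₀ ∧
      x t - ((t - t₀) / m) • (p t + ∫ s in t₀..t, f s)
        + (1 / m) • ∫ s in t₀..t, ∫ u in t₀..s, f u = x t₀ := by
  have hf_int : IntervalIntegrable f volume t₀ t :=
    (hf.integrableOn_isCompact isCompact_uIcc).intervalIntegrable
  have h_momentum : p t + ∫ s in t₀..t, f s = p t₀ := by
    rw [integral_eq_sub_of_hasDerivAt_neg (fun s _ ↦ hp s) hf_int, add_sub_cancel]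
  refine ⟨h_momentum, ?_⟩
  rw [h_momentum, integral_integral_eq_smul_sub_smul_sub hm (fun s _ ↦ hx s)
    (fun s _ ↦ hp s) hf_int]
  match_scalars <;> field_simp <;> ring

end HamiltonEquations

/-- The constants of motion `I₁` and `I₂` of the classical time-dependent
linear potential model `x' = p/m`, `p' = −f(t)`. -/
theorem classical_linear_potential_constants_of_motion
    (m : ℝ) (hm : m ≠ 0) (f : ℝ → ℝ) (hf : Continuous f)
    (x p : ℝ → ℝ)
    (hx : ∀ t, HasDerivAt x (p t / m) t)
    (hp : ∀ t, HasDerivAt p (-f t) t)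
    (I₁ I₂ : ℝ → ℝ)
    (hI₁ : ∀ t, I₁ t = p t + ∫ s in (0:ℝ)..t, f s)
    (hI₂ : ∀ t, I₂ t = x t - (t / m) * (p t + ∫ s in (0:ℝ)..t, f s)
      + (1 / m) * ∫ s in (0:ℝ)..t, (∫ u in (0:ℝ)..s, f u)) :
    (∀ t₁ t₂, I₁ t₁ = I₁ t₂) ∧ (∀ t₁ t₂, I₂ t₁ = I₂ t₂) := by
  have h_initial : ∀ t, I₁ t = p 0 ∧ I₂ t = x 0 := fun t ↦ by
    simpa only [hI₁, hI₂, sub_zero, smul_eq_mul] using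
      classical_linear_potential_constants_of_motion_general hm hf.locallyIntegrable
        (fun s ↦ (hx s).congr_deriv (div_eq_inv_mul _ _)) hp 0 t
  exact ⟨fun _ _ ↦ by simp only [h_initial], fun _ _ ↦ by simp only [h_initial]⟩
end

section
/- Let m ∈ ℝ with m ≠ 0 and let f : ℝ → ℝ be continuous. Define u₁(t) = t/m, u₂(t) = −∫₀ᵗ f(s) ds, u₃(t) = (1/m)·∫₀ᵗ (∫₀^{s} f(u) du) ds, and u₄(t) = (1/m)·∫₀ᵗ f(s)·(∫₀^{s} (∫₀^{u} f(w) dw) du) ds + (1/(2m))·∫₀ᵗ (∫₀^{s} f(u) du)² ds. Then u₁(0) = u₂(0) = u₃(0) = u₄(0) = 0 and for all t ∈ ℝ: u₁'(t) = 1/m, u₂'(t) = −f(t), u₃'(t) = −u₂(t)/m, and u₄'(t) = f(t)·u₃(t) + u₂(t)²/(2m). -/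
theorem hasDerivAt_primitive_of_continuous {E : Type*} [NormedAddCommGroup E] [NormedSpace ℝ E]
    [CompleteSpace E] {g : ℝ → E} (hg : Continuous g) (a t : ℝ) :
    HasDerivAt (fun x ↦ ∫ s in a..x, g s) (g t) t :=
  (hg.integral_hasStrictDerivAt a t).hasDerivAt

/-- The solution of the Wei–Norman system for the quantum time-dependent linear
potential on the centrally extended Heisenberg algebra: `u₁' = 1/m`,
`u₂' = −f`, `u₃' = −u₂/m`, `u₄' = f u₃ + u₂²/(2m)`, with zero initial
conditions. -/
theorem wei_norman_quantum_linear_potential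
    (m : ℝ) (hm : m ≠ 0) (f : ℝ → ℝ) (hf : Continuous f)
    (u₁ u₂ u₃ u₄ : ℝ → ℝ)
    (hu₁ : ∀ t, u₁ t = t / m)
    (hu₂ : ∀ t, u₂ t = -∫ s in (0:ℝ)..t, f s)
    (hu₃ : ∀ t, u₃ t = (1 / m) * ∫ s in (0:ℝ)..t, (∫ u in (0:ℝ)..s, f u))
    (hu₄ : ∀ t, u₄ t =
      (1 / m) * (∫ s in (0:ℝ)..t, f s * (∫ u in (0:ℝ)..s, (∫ w in (0:ℝ)..u, f w)))
      + (1 / (2 * m)) * ∫ s in (0:ℝ)..t, (∫ u in (0:ℝ)..s, f u) ^ 2) :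
    u₁ 0 = 0 ∧ u₂ 0 = 0 ∧ u₃ 0 = 0 ∧ u₄ 0 = 0 ∧
    ∀ t, HasDerivAt u₁ (1 / m) t ∧ HasDerivAt u₂ (-f t) t ∧
      HasDerivAt u₃ (-u₂ t / m) t ∧
      HasDerivAt u₄ (f t * u₃ t + (u₂ t) ^ 2 / (2 * m)) t := by
  have hF : Continuous fun s ↦ ∫ u in 0..s, f u := by fun_prop
  have hG : Continuous fun s ↦ ∫ u in 0..s, ∫ w in 0..u, f w := by fun_prop
  have deriv_u₁ (t : ℝ) : HasDerivAt u₁ (1 / m) t := by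
    simpa only [funext hu₁] using (hasDerivAt_id' t).div_const m
  have deriv_u₂ (t : ℝ) : HasDerivAt u₂ (-f t) t := by
    simpa only [funext hu₂] using (hasDerivAt_primitive_of_continuous hf 0 t).fun_neg
  have deriv_u₃ (t : ℝ) : HasDerivAt u₃ (1 / m * ∫ u in 0..t, f u) t := by
    simpa only [funext hu₃] using (hasDerivAt_primitive_of_continuous hF 0 t).const_mul (1 / m)
  have deriv_u₄ (t : ℝ) : HasDerivAt u₄
      (1 / m * (f t * ∫ u in 0..t, ∫ w in 0..u, f w)
        + 1 / (2 * m) * (∫ u in 0..t, f u) ^ 2) t := by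
    simpa only [funext hu₄] using
      ((hasDerivAt_primitive_of_continuous (hf.fun_mul hG) 0 t).const_mul (1 / m)).fun_add
        ((hasDerivAt_primitive_of_continuous (hF.fun_pow 2) 0 t).const_mul (1 / (2 * m)))
  refine ⟨by simp [hu₁], by simp [hu₂], by simp [hu₃], by simp [hu₄], fun t ↦
    ⟨deriv_u₁ t, deriv_u₂ t, (deriv_u₃ t).congr_deriv ?_, (deriv_u₄ t).congr_deriv ?_⟩⟩
  · rw [hu₂]
    ring
  · rw [hu₂, hu₃]
    ring
end

section
/- Let m ∈ ℝ with m ≠ 0, let f : ℝ → ℝ be continuous, and define v₁(t) = t/m, v₂(t) = −∫₀ᵗ f(s) ds, v₃(t) = (1/m)·∫₀ᵗ (∫₀^{s} f(u) du) ds, and v₄(t) = −(1/(2m))·∫₀ᵗ (∫₀^{s} f(u) du)² ds. Let ψ₀ : ℝ → ℂ be differentiable and define ψ : ℝ × ℝ → ℂ by ψ(p,t) = exp(−i·v₄(t)) · exp( i·( v₃(t)·(p + v₂(t)) + v₁(t)·(p + v₂(t))²/2 ) ) · ψ₀(p + v₂(t)). Then ψ(p,0) = ψ₀(p) for all p, and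 ψ satisfies the first-order partial differential equation ∂ψ/∂t (p,t) + f(t)·∂ψ/∂p (p,t) = i·(p²/(2m))·ψ(p,t) for all (p,t) ∈ ℝ × ℝ. Moreover v₁(0) = v₂(0) = v₃(0) = v₄(0) = 0 and v₁' = 1/m, v₂' = −f, v₃' = −v₂/m, v₄' = −v₂²/(2m). -/
/-!
In the coordinate `x = p + v₂ t`, constant along the characteristics of `∂ₜ + f ∂ₚ` because
`v₂' = -f`, the wave function is `exp (i (v₃ x + v₁ x² / 2 - v₄)) ψ₀ x`: only its phase varies along
a characteristic. The remaining Wei–Norman equations give the phase the velocity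
`-v₂ x / m + x² / (2m) + v₂² / (2m) = (x - v₂)² / (2m) = p² / (2m)`, the kinetic energy.
-/

section Characteristics

variable {𝕜 E : Type*} [NontriviallyNormedField 𝕜] [NormedAddCommGroup E] [NormedSpace 𝕜 E]

theorem exists_hasDerivAt_partials_of_hasDerivAt_along_curve {u : 𝕜 × 𝕜 → E} {γ : 𝕜 → 𝕜}
    {t c : 𝕜} {u' : E} (hu : DifferentiableAt 𝕜 u (γ t, t)) (hγ : HasDerivAt γ c t)
    (huγ : HasDerivAt (fun τ => u (γ τ, τ)) u' t) :
    ∃ dudt dudp : E, HasDerivAt (fun τ => u (γ t, τ)) dudt t ∧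
      HasDerivAt (fun q => u (q, t)) dudp (γ t) ∧ dudt + c • dudp = u' := by
  set L := fderiv 𝕜 u (γ t, t)
  have hL : HasFDerivAt u L (γ t, t) := hu.hasFDerivAt
  refine ⟨L (0, 1), L (1, 0),
    hL.comp_hasDerivAt t ((hasDerivAt_const t (γ t)).prodMk (hasDerivAt_id t)),
    hL.comp_hasDerivAt (γ t) ((hasDerivAt_id (γ t)).prodMk (hasDerivAt_const (γ t) t)), ?_⟩
  have hLγ : HasDerivAt (fun τ => u (γ τ, τ)) (L (c, 1)) t :=
    hL.comp_hasDerivAt (f := fun τ => (γ τ, τ)) t (hγ.prodMk (hasDerivAt_id t))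
  calc L (0, 1) + c • L (1, 0) = L (c, 1) := by simp [← map_smul, ← map_add]
    _ = u' := hLγ.unique huγ

end Characteristics

/-- The Wei–Norman equations of `H = P²/(2m) + f(t) X`, without initial conditions, for the
canonical coordinates of `exp (-v₄ a₄) exp (-v₂ a₂) exp (-v₃ a₃) exp (-v₁ a₁)`. -/
structure IsWeiNormanSolution (m : ℝ) (f v₁ v₂ v₃ v₄ : ℝ → ℝ) : Prop where
  hasDerivAt_one : ∀ t, HasDerivAt v₁ (1 / m) t
  hasDerivAt_two : ∀ t, HasDerivAt v₂ (-f t) t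
  hasDerivAt_three : ∀ t, HasDerivAt v₃ (-v₂ t / m) t
  hasDerivAt_four : ∀ t, HasDerivAt v₄ (-(v₂ t) ^ 2 / (2 * m)) t

theorem isWeiNormanSolution_integral (m : ℝ) {f : ℝ → ℝ} (hf : Continuous f) :
    IsWeiNormanSolution m f (fun t => t / m) (fun t => -∫ s in (0 : ℝ)..t, f s)
      (fun t => (1 / m) * ∫ s in (0 : ℝ)..t, ∫ u in (0 : ℝ)..s, f u)
      (fun t => -(1 / (2 * m)) * ∫ s in (0 : ℝ)..t, (∫ u in (0 : ℝ)..s, f u) ^ 2) := by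
  have hasDerivAt_primitive {g : ℝ → ℝ} (hg : Continuous g) (t : ℝ) :
      HasDerivAt (fun t => ∫ s in (0 : ℝ)..t, g s) (g t) t :=
    (hg.integral_hasStrictDerivAt 0 t).hasDerivAt
  have hF : Continuous fun t => ∫ s in (0 : ℝ)..t, f s :=
    continuous_iff_continuousAt.2 fun t => (hasDerivAt_primitive hf t).continuousAt
  have hF_sq : Continuous fun t => (∫ s in (0 : ℝ)..t, f s) ^ 2 := hF.pow 2
  exact
    { hasDerivAt_one := fun t => (hasDerivAt_id t).div_const m
      hasDerivAt_two := fun t => (hasDerivAt_primitive hf t).neg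
      hasDerivAt_three := fun t =>
        ((hasDerivAt_primitive hF t).const_mul (1 / m)).congr_deriv (by ring)
      hasDerivAt_four := fun t =>
        ((hasDerivAt_primitive hF_sq t).const_mul (-(1 / (2 * m)))).congr_deriv (by ring) }

/-- The phase acquired up to time `t` along the characteristic labelled by `x = p + v₂ t`. -/
noncomputable def weiNormanPhase (v₁ v₃ v₄ : ℝ → ℝ) (x t : ℝ) : ℝ :=
  v₃ t * x + v₁ t / 2 * x ^ 2 - v₄ t

/-- The momentum-space wave function with initial state `ψ₀`, at `z = (p, t)`. The two exponentials
of the Wei–Norman factorization are merged into one phase factor. -/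
noncomputable def weiNormanWaveFunction (v₁ v₂ v₃ v₄ : ℝ → ℝ) (ψ₀ : ℝ → ℂ) (z : ℝ × ℝ) : ℂ :=
  Complex.exp (Complex.I * weiNormanPhase v₁ v₃ v₄ (z.1 + v₂ z.2) z.2) * ψ₀ (z.1 + v₂ z.2)

section WaveFunction

variable {m : ℝ} {f v₁ v₂ v₃ v₄ : ℝ → ℝ} {ψ₀ : ℝ → ℂ}

theorem weiNormanWaveFunction_eq_exp_mul_exp (p t : ℝ) :
    weiNormanWaveFunction v₁ v₂ v₃ v₄ ψ₀ (p, t) =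
      Complex.exp (-Complex.I * (v₄ t : ℂ)) *
      Complex.exp (Complex.I *
        ((v₃ t : ℂ) * ((p : ℂ) + (v₂ t : ℂ)) +
          (v₁ t : ℂ) * ((p : ℂ) + (v₂ t : ℂ)) ^ 2 / 2)) *
      ψ₀ (p + v₂ t) := by
  rw [weiNormanWaveFunction, weiNormanPhase, ← Complex.exp_add]
  push_cast
  ring_nf

theorem weiNormanWaveFunction_eq_initial {t : ℝ} (h₁ : v₁ t = 0) (h₂ : v₂ t = 0)
    (h₃ : v₃ t = 0) (h₄ : v₄ t = 0) (p : ℝ) :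
    weiNormanWaveFunction v₁ v₂ v₃ v₄ ψ₀ (p, t) = ψ₀ p := by
  simp [weiNormanWaveFunction, weiNormanPhase, h₁, h₂, h₃, h₄]

theorem weiNormanWaveFunction_along_characteristic (x t : ℝ) :
    weiNormanWaveFunction v₁ v₂ v₃ v₄ ψ₀ (x - v₂ t, t) =
      Complex.exp (Complex.I * weiNormanPhase v₁ v₃ v₄ x t) * ψ₀ x := by
  simp only [weiNormanWaveFunction, sub_add_cancel]

namespace IsWeiNormanSolution

theorem hasDerivAt_weiNormanPhase (h : IsWeiNormanSolution m f v₁ v₂ v₃ v₄) (x t : ℝ) :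
    HasDerivAt (weiNormanPhase v₁ v₃ v₄ x) ((x - v₂ t) ^ 2 / (2 * m)) t :=
  ((((h.hasDerivAt_three t).mul_const x).add
    (((h.hasDerivAt_one t).div_const 2).mul_const (x ^ 2))).sub
      (h.hasDerivAt_four t)).congr_deriv (by ring)

theorem hasDerivAt_waveFunction_along_characteristic
    (h : IsWeiNormanSolution m f v₁ v₂ v₃ v₄) (x t : ℝ) :
    HasDerivAt (fun τ => weiNormanWaveFunction v₁ v₂ v₃ v₄ ψ₀ (x - v₂ τ, τ))
      (Complex.I * (((x - v₂ t) ^ 2 / (2 * m) : ℝ) : ℂ) *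
        weiNormanWaveFunction v₁ v₂ v₃ v₄ ψ₀ (x - v₂ t, t)) t := by
  simp only [weiNormanWaveFunction_along_characteristic]
  exact (((h.hasDerivAt_weiNormanPhase x t).ofReal_comp.const_mul Complex.I).cexp.mul_const
    (ψ₀ x)).congr_deriv (by ring)

theorem differentiableAt_waveFunction (h : IsWeiNormanSolution m f v₁ v₂ v₃ v₄) {p t : ℝ}
    (hψ₀ : DifferentiableAt ℝ ψ₀ (p + v₂ t)) :
    DifferentiableAt ℝ (weiNormanWaveFunction v₁ v₂ v₃ v₄ ψ₀) (p, t) := by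
  have comp_snd {v : ℝ → ℝ} (hv : DifferentiableAt ℝ v t) :
      DifferentiableAt ℝ (fun z : ℝ × ℝ => v z.2) (p, t) :=
    DifferentiableAt.comp (p, t) hv differentiableAt_snd
  have h₁ := comp_snd ((h.hasDerivAt_one t).div_const 2).differentiableAt
  have h₃ := comp_snd (h.hasDerivAt_three t).differentiableAt
  have h₄ := comp_snd (h.hasDerivAt_four t).differentiableAt
  have hx : DifferentiableAt ℝ (fun z : ℝ × ℝ => z.1 + v₂ z.2) (p, t) :=
    differentiableAt_fst.add (comp_snd (h.hasDerivAt_two t).differentiableAt)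
  have hphase : DifferentiableAt ℝ
      (fun z : ℝ × ℝ => weiNormanPhase v₁ v₃ v₄ (z.1 + v₂ z.2) z.2) (p, t) :=
    ((h₃.mul hx).add (h₁.mul (hx.pow 2))).sub h₄
  exact ((Complex.ofRealCLM.differentiableAt.comp (p, t) hphase).const_mul Complex.I).cexp.mul
    (DifferentiableAt.comp (p, t) hψ₀ hx)

theorem waveFunction_transport_equation (h : IsWeiNormanSolution m f v₁ v₂ v₃ v₄) {p t : ℝ}
    (hψ₀ : DifferentiableAt ℝ ψ₀ (p + v₂ t)) :
    ∃ dψdt dψdp : ℂ,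
      HasDerivAt (fun τ => weiNormanWaveFunction v₁ v₂ v₃ v₄ ψ₀ (p, τ)) dψdt t ∧
      HasDerivAt (fun q => weiNormanWaveFunction v₁ v₂ v₃ v₄ ψ₀ (q, t)) dψdp p ∧
      dψdt + (f t : ℂ) * dψdp =
        Complex.I * ((p : ℂ) ^ 2 / (2 * (m : ℂ))) *
          weiNormanWaveFunction v₁ v₂ v₃ v₄ ψ₀ (p, t) := by
  have hγ : HasDerivAt (fun τ => p + v₂ t - v₂ τ) (f t) t :=
    ((h.hasDerivAt_two t).const_sub (p + v₂ t)).congr_deriv (neg_neg (f t))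
  have hγt : p + v₂ t - v₂ t = p := add_sub_cancel_right p (v₂ t)
  have hψ : DifferentiableAt ℝ (weiNormanWaveFunction v₁ v₂ v₃ v₄ ψ₀) (p + v₂ t - v₂ t, t) :=
    hγt.symm ▸ h.differentiableAt_waveFunction hψ₀
  simpa [hγt] using exists_hasDerivAt_partials_of_hasDerivAt_along_curve hψ hγ
    (h.hasDerivAt_waveFunction_along_characteristic (p + v₂ t) t)

end IsWeiNormanSolution

end WaveFunction

open Complex in
/-- The explicit wave function, in momentum representation, for the quantum
time-dependent linear potential `H = P²/(2m) + f(t) X`: with the Wei–Norman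
coordinates `v₁, v₂, v₃, v₄`, the function
`ψ(p,t) = e^{−i v₄(t)} e^{i(v₃(t)(p+v₂(t)) + v₁(t)(p+v₂(t))²/2)} ψ₀(p+v₂(t))`
satisfies `ψ(p,0) = ψ₀(p)` and the evolution equation
`∂ψ/∂t + f(t) ∂ψ/∂p = i (p²/(2m)) ψ`, and the `vᵢ` solve the Wei–Norman
system with zero initial conditions. -/
theorem quantum_linear_potential_wave_function
    (m : ℝ) (hm : m ≠ 0) (f : ℝ → ℝ) (hf : Continuous f)
    (v₁ v₂ v₃ v₄ : ℝ → ℝ)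
    (hv₁ : ∀ t, v₁ t = t / m)
    (hv₂ : ∀ t, v₂ t = -∫ s in (0:ℝ)..t, f s)
    (hv₃ : ∀ t, v₃ t = (1 / m) * ∫ s in (0:ℝ)..t, (∫ u in (0:ℝ)..s, f u))
    (hv₄ : ∀ t, v₄ t = -(1 / (2 * m)) * ∫ s in (0:ℝ)..t, (∫ u in (0:ℝ)..s, f u) ^ 2)
    (ψ₀ : ℝ → ℂ) (hψ₀ : Differentiable ℝ ψ₀)
    (ψ : ℝ × ℝ → ℂ)
    (hψ : ∀ p t, ψ (p, t) =
      Complex.exp (-Complex.I * (v₄ t : ℂ)) *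
      Complex.exp (Complex.I *
        ((v₃ t : ℂ) * ((p : ℂ) + (v₂ t : ℂ)) +
          (v₁ t : ℂ) * ((p : ℂ) + (v₂ t : ℂ)) ^ 2 / 2)) *
      ψ₀ (p + v₂ t)) :
    (∀ p : ℝ, ψ (p, 0) = ψ₀ p) ∧
    (∀ (p t : ℝ), ∃ dψdt dψdp : ℂ,
      HasDerivAt (fun τ => ψ (p, τ)) dψdt t ∧
      HasDerivAt (fun q => ψ (q, t)) dψdp p ∧
      dψdt + (f t : ℂ) * dψdp =
        Complex.I * ((p : ℂ) ^ 2 / (2 * (m : ℂ))) * ψ (p, t)) ∧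
    (v₁ 0 = 0 ∧ v₂ 0 = 0 ∧ v₃ 0 = 0 ∧ v₄ 0 = 0) ∧
    (∀ t, HasDerivAt v₁ (1 / m) t ∧ HasDerivAt v₂ (-f t) t ∧
      HasDerivAt v₃ (-v₂ t / m) t ∧
      HasDerivAt v₄ (-(v₂ t) ^ 2 / (2 * m)) t) := by
  have hv : IsWeiNormanSolution m f v₁ v₂ v₃ v₄ := by
    rw [funext hv₁, funext hv₂, funext hv₃, funext hv₄]
    exact isWeiNormanSolution_integral m hf
  obtain rfl : ψ = weiNormanWaveFunction v₁ v₂ v₃ v₄ ψ₀ :=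
    funext fun z => (hψ z.1 z.2).trans (weiNormanWaveFunction_eq_exp_mul_exp z.1 z.2).symm
  have h₁ : v₁ 0 = 0 := by simp [hv₁]
  have h₂ : v₂ 0 = 0 := by simp [hv₂]
  have h₃ : v₃ 0 = 0 := by simp [hv₃]
  have h₄ : v₄ 0 = 0 := by simp [hv₄]
  exact ⟨weiNormanWaveFunction_eq_initial h₁ h₂ h₃ h₄,
    fun p t => hv.waveFunction_transport_equation (hψ₀ (p + v₂ t)),
    ⟨h₁, h₂, h₃, h₄⟩,
    fun t => ⟨hv.hasDerivAt_one t, hv.hasDerivAt_two t, hv.hasDerivAt_three t,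
      hv.hasDerivAt_four t⟩⟩
end
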